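/- arXiv:2204.03136 — 9 statements merged into one kernel-verified Lean document; each statement's English description precedes it below -/
import Mathlib

section
/- If a simplicial complex Δ is a quasi-forest, then for every subset W of the vertex set of Δ, the induced subcomplex Δ_W is a quasi-forest. -/
/-!
STATEMENT 0: If a simplicial complex Δ is a quasi-forest, then for every subset W of the
vertex set of Δ, the induced subcomplex Δ_W is a quasi-forest.

We represent an abstract simplicial complex by its set of faces `K : Set (Finset V)`
(a collection of finite subsets of `V`), together with the downward-closedness hypothesis.
-/

variable {V : Type*} [DecidableEq V]

/-- `F` is a facet (maximal face) of the complex with face set `K`. -/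
def IsFacet (K : Set (Finset V)) (F : Finset V) : Prop :=
  F ∈ K ∧ ∀ G ∈ K, F ⊆ G → F = G

/-- `F` is a leaf of the complex with face set `K`: either `F` is the only facet, or there
is a facet `G ≠ F` such that `F ∩ H ⊆ G` for every facet `H ≠ F`. -/
def IsLeaf (K : Set (Finset V)) (F : Finset V) : Prop :=
  IsFacet K F ∧
    ((∀ H, IsFacet K H → H = F) ∨
      ∃ G, IsFacet K G ∧ G ≠ F ∧ ∀ H, IsFacet K H → H ≠ F → F ∩ H ⊆ G)

/-- The simplicial complex `⟨F 0, …, F i⟩` generated by the sets `F j` for `j ≤ i`: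
its faces are the subsets of the `F j`, `j ≤ i`. -/
def genUpTo {t : ℕ} (F : Fin t → Finset V) (i : Fin t) : Set (Finset V) :=
  {σ | ∃ j, j ≤ i ∧ σ ⊆ F j}

/-- A complex is a quasi-forest if its facets can be enumerated (without repetition) as
`F 0, …, F (t-1)`, every face lies in some facet, and for each `i` the facet `F i` is a
leaf of the subcomplex `⟨F 0, …, F i⟩`. -/
def IsQuasiForest (K : Set (Finset V)) : Prop :=
  ∃ (t : ℕ) (F : Fin t → Finset V),
    Function.Injective F ∧
    (∀ σ, IsFacet K σ ↔ ∃ i, σ = F i) ∧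
    (∀ σ ∈ K, ∃ i, σ ⊆ F i) ∧
    ∀ i : Fin t, IsLeaf (genUpTo F i) (F i)

/-- The first `n` sets of the sequence `F` have the running intersection property. -/
def RunningIntersection (F : ℕ → Finset V) (n : ℕ) : Prop :=
  ∀ i < n, 0 < i → ∃ j < i, ∀ k < i, F i ∩ F k ⊆ F j

/-- The first `n` sets of the sequence `F` are pairwise incomparable. -/
def PairwiseIncomparable (F : ℕ → Finset V) (n : ℕ) : Prop :=
  ∀ i < n, ∀ j < n, F i ⊆ F j → i = j

/-- Restricting every set of the sequence by a predicate preserves running intersections. -/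
theorem RunningIntersection.filter {F : ℕ → Finset V} {n : ℕ} (h : RunningIntersection F n)
    (p : V → Prop) [DecidablePred p] : RunningIntersection (fun i => (F i).filter p) n := by
  intro i hi hi0
  obtain ⟨j, hj, hjk⟩ := h i hi hi0
  refine ⟨j, hj, fun k hk x hx => ?_⟩
  have := @hjk k hk x
  simp only [Finset.mem_inter, Finset.mem_filter] at *
  tauto

/-- Appending a set whose trace on the sequence is contained in a single member. -/
theorem RunningIntersection.append {G : ℕ → Finset V} {m : ℕ} (h : RunningIntersection G m)
    {A : Finset V} {l : ℕ} (hl : l < m) (hA : ∀ k < m, A ∩ G k ⊆ G l) :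
    RunningIntersection (Function.update G m A) (m + 1) := by
  intro i hi hi0
  rcases Nat.lt_succ_iff_lt_or_eq.mp hi with him | rfl
  · obtain ⟨j, hj, hjk⟩ := h i him hi0
    refine ⟨j, hj, fun k hk => ?_⟩
    rw [Function.update_of_ne (by omega), Function.update_of_ne (by omega),
      Function.update_of_ne (by omega)]
    exact hjk k hk
  · refine ⟨l, hl, fun k hk => ?_⟩
    rw [Function.update_self, Function.update_of_ne (by omega), Function.update_of_ne (by omega)]
    exact hA k hk

/-- Enlarging a member of the sequence without enlarging its traces on the other members. -/
theorem RunningIntersection.enlarge {G : ℕ → Finset V} {m : ℕ} (h : RunningIntersection G m)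
    {A : Finset V} {l : ℕ} (hlA : G l ⊆ A) (hA : ∀ k < m, k ≠ l → A ∩ G k ⊆ G l) :
    RunningIntersection (Function.update G l A) m := by
  have hle : ∀ j, G j ⊆ Function.update G l A j := by
    intro j
    by_cases hj : j = l
    · subst hj; simpa using hlA
    · rw [Function.update_of_ne hj]
  have htrace : ∀ i < m, ∀ k < m, i ≠ k →
      Function.update G l A i ∩ Function.update G l A k ⊆ G i ∩ G k := by
    intro i hi k hk hik x hx
    rw [Finset.mem_inter] at hx ⊢
    by_cases hil : i = l
    · subst hil
      rw [Function.update_self, Function.update_of_ne hik.symm] at hx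
      exact ⟨hA k hk hik.symm (Finset.mem_inter.mpr hx), hx.2⟩
    · rw [Function.update_of_ne hil] at hx
      by_cases hkl : k = l
      · subst hkl
        rw [Function.update_self] at hx
        exact ⟨hx.1, hA i hi hik (Finset.mem_inter.mpr hx.symm)⟩
      · rwa [Function.update_of_ne hkl] at hx
  intro i hi hi0
  obtain ⟨j, hj, hjk⟩ := h i hi hi0
  exact ⟨j, hj, fun k hk =>
    ((htrace i hi k (hk.trans hi) hk.ne').trans (hjk k hk)).trans (hle j)⟩

/-- A sequence with running intersections can be thinned out to one whose members are
pairwise incomparable, without changing the complex it generates. -/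
theorem RunningIntersection.exists_pairwiseIncomparable {F : ℕ → Finset V} {n : ℕ}
    (h : RunningIntersection F n) :
    ∃ (m : ℕ) (G : ℕ → Finset V), RunningIntersection G m ∧ PairwiseIncomparable G m ∧
      ∀ σ, (∃ i < n, σ ⊆ F i) ↔ ∃ i < m, σ ⊆ G i := by
  induction n with
  | zero => exact ⟨0, F, h, fun i hi => by omega, fun σ => Iff.rfl⟩
  | succ n ih =>
    obtain ⟨m, G, hG, hanti, hgen⟩ := ih fun i hi => h i (by omega)
    have hsucc : ∀ σ, (∃ i < n + 1, σ ⊆ F i) ↔ (∃ i < m, σ ⊆ G i) ∨ σ ⊆ F n := by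
      intro σ
      rw [← hgen, Nat.exists_lt_succ_right]
    rcases Nat.eq_zero_or_pos n with rfl | hn
    · refine ⟨1, F, h, fun i hi j hj _ => by omega, fun σ => Iff.rfl⟩
    obtain ⟨j, hj, hjk⟩ := h n (by omega) hn
    obtain ⟨l, hl, hjl⟩ := (hgen (F j)).mp ⟨j, hj, subset_rfl⟩
    have htrace : ∀ k < m, F n ∩ G k ⊆ G l := by
      intro k hk
      obtain ⟨i, hi, hki⟩ := (hgen (G k)).mpr ⟨k, hk, subset_rfl⟩
      exact ((Finset.inter_subset_inter_left hki).trans (hjk i hi)).trans hjl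
    by_cases hmem : ∃ k < m, F n ⊆ G k
    · obtain ⟨k, hk, hnk⟩ := hmem
      refine ⟨m, G, hG, hanti, fun σ => (hsucc σ).trans ⟨?_, Or.inl⟩⟩
      rintro (hσ | hσ)
      · exact hσ
      · exact ⟨k, hk, hσ.trans hnk⟩
    have hbelow : ∀ k < m, G k ⊆ F n → k = l := fun k hk hkn =>
      hanti k hk l hl ((Finset.subset_inter hkn subset_rfl).trans (htrace k hk))
    push Not at hmem
    by_cases hln : G l ⊆ F n
    · refine ⟨m, Function.update G l (F n), hG.enlarge hln fun k hk _ => htrace k hk, ?_, ?_⟩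
      · intro i hi k hk hik
        simp only [Function.update_apply] at hik
        split_ifs at hik with hil hkl hkl
        · rw [hil, hkl]
        · exact absurd hik (hmem k hk)
        · exact (hil (hbelow i hi hik)).elim
        · exact hanti i hi k hk hik
      · intro σ
        rw [hsucc]
        constructor
        · rintro (⟨i, hi, hσ⟩ | hσ)
          · by_cases hil : i = l
            · exact ⟨l, hl, by rw [Function.update_self]; exact (hil ▸ hσ).trans hln⟩
            · exact ⟨i, hi, by rwa [Function.update_of_ne hil]⟩
          · exact ⟨l, hl, by rwa [Function.update_self]⟩
        · rintro ⟨i, hi, hσ⟩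
          by_cases hil : i = l
          · subst hil
            exact Or.inr (by rwa [Function.update_self] at hσ)
          · exact Or.inl ⟨i, hi, by rwa [Function.update_of_ne hil] at hσ⟩
    · have hnot : ∀ k < m, ¬ G k ⊆ F n := fun k hk hkn => hln (hbelow k hk hkn ▸ hkn)
      refine ⟨m + 1, Function.update G m (F n), hG.append hl htrace, ?_, ?_⟩
      · intro i hi k hk hik
        simp only [Function.update_apply] at hik
        split_ifs at hik with him hkm hkm
        · rw [him, hkm]
        · exact absurd hik (hmem k (by omega))
        · exact absurd hik (hnot i (by omega))
        · exact hanti i (by omega) k (by omega) hik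
      · intro σ
        rw [hsucc, Nat.exists_lt_succ_right, Function.update_self]
        refine or_congr_left (exists_congr fun i => and_congr_right fun hi => ?_)
        rw [Function.update_of_ne hi.ne]

set_option linter.unusedSectionVars false in
/-- The facets of a complex generated by pairwise incomparable sets are these sets. -/
theorem isFacet_genUpTo_iff {t : ℕ} {F : Fin t → Finset V}
    (hF : ∀ i j, F i ⊆ F j → i = j) (i : Fin t) (σ : Finset V) :
    IsFacet (genUpTo F i) σ ↔ ∃ j ≤ i, σ = F j := by
  constructor
  · rintro ⟨⟨j, hj, hσ⟩, hmax⟩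
    exact ⟨j, hj, hmax _ ⟨j, hj, subset_rfl⟩ hσ⟩
  · rintro ⟨j, hj, rfl⟩
    refine ⟨⟨j, hj, subset_rfl⟩, ?_⟩
    rintro G ⟨k, -, hGk⟩ hjG
    exact hjG.antisymm (hF j k (hjG.trans hGk) ▸ hGk)

/-- A complex generated by pairwise incomparable sets with running intersections is a
quasi-forest. -/
theorem RunningIntersection.isQuasiForest {G : ℕ → Finset V} {m : ℕ}
    (hG : RunningIntersection G m) (hanti : PairwiseIncomparable G m) {K : Set (Finset V)}
    (hK : ∀ σ, σ ∈ K ↔ ∃ i < m, σ ⊆ G i) : IsQuasiForest K := by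
  have hF : ∀ i j : Fin m, G i ⊆ G j → i = j := fun i j hij =>
    Fin.ext (hanti i i.2 j j.2 hij)
  refine ⟨m, fun i => G i, fun i j hij => hF i j hij.subset, fun σ => ⟨?_, ?_⟩, ?_, ?_⟩
  · rintro ⟨hσ, hmax⟩
    obtain ⟨i, hi, hσi⟩ := (hK σ).mp hσ
    exact ⟨⟨i, hi⟩, hmax _ ((hK _).mpr ⟨i, hi, subset_rfl⟩) hσi⟩
  · rintro ⟨i, rfl⟩
    refine ⟨(hK _).mpr ⟨i, i.2, subset_rfl⟩, fun τ hτ hiτ => ?_⟩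
    obtain ⟨j, hj, hτj⟩ := (hK τ).mp hτ
    have hij : (i : ℕ) = j := hanti i i.2 j hj (hiτ.trans hτj)
    subst hij
    exact hiτ.antisymm hτj
  · intro σ hσ
    obtain ⟨i, hi, hσi⟩ := (hK σ).mp hσ
    exact ⟨⟨i, hi⟩, hσi⟩
  · intro i
    have hfacet := isFacet_genUpTo_iff (F := fun i : Fin m => G i) hF i
    refine ⟨(hfacet _).mpr ⟨i, le_rfl, rfl⟩, ?_⟩
    rcases Nat.eq_zero_or_pos (i : ℕ) with hi | hi
    · left
      intro H hH
      obtain ⟨j, hj, rfl⟩ := (hfacet H).mp hH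
      have hji : j = i := Fin.ext (by rw [Fin.le_def] at hj; omega)
      rw [hji]
    · right
      obtain ⟨j, hj, hjk⟩ := hG i i.2 hi
      refine ⟨G j, (hfacet _).mpr ⟨⟨j, hj.trans i.2⟩, hj.le, rfl⟩, fun hji => ?_, ?_⟩
      · exact hj.ne (hanti j (hj.trans i.2) i i.2 hji.subset)
      · intro H hH hne
        obtain ⟨k, hk, rfl⟩ := (hfacet H).mp hH
        exact hjk k (lt_of_le_of_ne hk fun hki => hne (congrArg G hki))

/-- A quasi-forest is generated by a sequence with running intersections. -/
theorem IsQuasiForest.exists_runningIntersection {K : Set (Finset V)}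
    (hdc : ∀ σ ∈ K, ∀ τ : Finset V, τ ⊆ σ → τ ∈ K) (hqf : IsQuasiForest K) :
    ∃ (n : ℕ) (F : ℕ → Finset V), RunningIntersection F n ∧
      ∀ σ, σ ∈ K ↔ ∃ i < n, σ ⊆ F i := by
  obtain ⟨t, F, hinj, hfac, hcov, hleaf⟩ := hqf
  have hFK : ∀ i, IsFacet K (F i) := fun i => (hfac _).mpr ⟨i, rfl⟩
  have hanti : ∀ i j, F i ⊆ F j → i = j := fun i j hij =>
    hinj ((hFK i).2 _ (hFK j).1 hij)
  have hval : ∀ i (hi : i < t), (fun i => if h : i < t then F ⟨i, h⟩ else ∅) i = F ⟨i, hi⟩ :=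
    fun i hi => dif_pos hi
  refine ⟨t, fun i => if h : i < t then F ⟨i, h⟩ else ∅, ?_, fun σ => ⟨?_, ?_⟩⟩
  · intro i hi hi0
    have hfacet := isFacet_genUpTo_iff hanti ⟨i, hi⟩
    rcases (hleaf ⟨i, hi⟩).2 with honly | ⟨G, hG, hne, hGH⟩
    · have h0 := honly (F ⟨0, hi0.trans hi⟩) ((hfacet _).mpr ⟨_, Nat.zero_le i, rfl⟩)
      exact absurd (Fin.ext_iff.mp (hinj h0)) hi0.ne
    · obtain ⟨j, hj, rfl⟩ := (hfacet G).mp hG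
      refine ⟨j, lt_of_le_of_ne hj fun hji => hne (congrArg F (Fin.ext hji)), fun k hk => ?_⟩
      rw [hval i hi, hval k (hk.trans hi), hval j j.2]
      refine hGH _ ((hfacet _).mpr ⟨_, hk.le, rfl⟩) fun hki => ?_
      exact hk.ne (Fin.ext_iff.mp (hinj hki))
  · intro hσ
    obtain ⟨i, hi⟩ := hcov σ hσ
    exact ⟨i, i.2, by rwa [hval i i.2]⟩
  · rintro ⟨i, hi, hσ⟩
    rw [hval i hi] at hσ
    exact hdc _ (hFK _).1 σ hσ

/-- Induced subcomplexes of quasi-forests are quasi-forests. -/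
theorem isQuasiForest_induced (K : Set (Finset V))
    (hdc : ∀ σ ∈ K, ∀ τ : Finset V, τ ⊆ σ → τ ∈ K)
    (hqf : IsQuasiForest K) (W : Set V) :
    IsQuasiForest {σ ∈ K | (σ : Set V) ⊆ W} := by
  classical
  obtain ⟨n, F, hF, hK⟩ := hqf.exists_runningIntersection hdc
  obtain ⟨m, G, hG, hanti, hgen⟩ := (hF.filter (· ∈ W)).exists_pairwiseIncomparable
  refine hG.isQuasiForest hanti fun σ => ?_
  rw [← hgen, Set.mem_ofPred_eq, hK]
  constructor
  · rintro ⟨⟨i, hi, hσ⟩, hW⟩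
    exact ⟨i, hi, fun x hx => Finset.mem_filter.mpr ⟨hσ hx, hW hx⟩⟩
  · rintro ⟨i, hi, hσ⟩
    exact ⟨⟨i, hi, hσ.trans (Finset.filter_subset _ _)⟩,
      fun x hx => (Finset.mem_filter.mp (hσ hx)).2⟩
end

section
/- Every quasi-tree is collapsible, i.e., it can be reduced to a single point by a finite sequence of collapses. -/
/-!
STATEMENT 1: Every quasi-tree is collapsible, i.e., it can be reduced to a single point
by a finite sequence of collapses.

We represent an abstract simplicial complex by its set of faces `K : Set (Finset V)`
(a collection of finite subsets of `V`), together with the downward-closedness hypothesis.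
-/

variable {V : Type*} [DecidableEq V]

/-- A complex is connected if it has at least one vertex and any two of its vertices are
joined by a path of edges of the complex. -/
def IsConnectedComplex (K : Set (Finset V)) : Prop :=
  (∃ v : V, {v} ∈ K) ∧
    ∀ u v : V, {u} ∈ K → {v} ∈ K →
      Relation.ReflTransGen (fun a b => ({a, b} : Finset V) ∈ K) u v

/-- `K'` is obtained from `K` by a single collapse: there is a face `σ` properly contained
in a unique facet `F` (a free face), and `K'` is obtained by removing all faces `τ` with
`σ ⊆ τ ⊆ F`. -/
def CollapseStep (K K' : Set (Finset V)) : Prop :=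
  ∃ σ F : Finset V, σ ∈ K ∧ IsFacet K F ∧ σ ⊂ F ∧
    (∀ G, IsFacet K G → σ ⊂ G → G = F) ∧
    K' = K \ {τ | σ ⊆ τ ∧ τ ⊆ F}

/-- A complex is collapsible if some finite sequence of collapses reduces it to a
one-point complex. -/
def Collapsible (K : Set (Finset V)) : Prop :=
  ∃ K' : Set (Finset V), Relation.ReflTransGen CollapseStep K K' ∧
    ∃ v : V, K' = {σ : Finset V | σ ⊆ {v}}

/-- Gluing a simplex `F` to a complex `L` along a nonempty face `A` of `L` can be undone by
collapses, each of which removes the open star of one vertex of `F \ A`. -/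
theorem reflTransGen_collapseStep_of_glue (L : Set (Finset V))
    (hL : ∀ σ ∈ L, ∀ τ : Finset V, τ ⊆ σ → τ ∈ L) {A : Finset V} (hA : A.Nonempty)
    (hAL : A ∈ L) (F : Finset V) (hAF : A ⊆ F) (hF : ∀ σ ⊆ F, σ ∈ L → σ ⊆ A) :
    Relation.ReflTransGen CollapseStep (L ∪ {σ | σ ⊆ F}) L := by
  induction F using Finset.strongInduction with
  | H F ih =>
    by_cases hFA : F ⊆ A
    · have hsub : {σ | σ ⊆ F} ⊆ L := fun σ hσ => hL A hAL σ (Finset.Subset.trans hσ hFA)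
      rw [Set.union_eq_left.2 hsub]
    · obtain ⟨v, hvF, hvA⟩ := Finset.not_subset.1 hFA
      have hvL : ∀ G ∈ L, v ∉ G := fun G hG hv =>
        hvA (Finset.singleton_subset_iff.1 (hF {v} (Finset.singleton_subset_iff.2 hvF)
          (hL G hG _ (Finset.singleton_subset_iff.2 hv))))
      refine Relation.ReflTransGen.head ?_ (ih (F.erase v) (Finset.erase_ssubset hvF)
        (Finset.subset_erase.2 ⟨hAF, hvA⟩)
        fun σ hσ => hF σ (hσ.trans (Finset.erase_subset v F)))
      have hFfacet : IsFacet (L ∪ {σ | σ ⊆ F}) F := by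
        refine ⟨Or.inr (Finset.Subset.refl F), ?_⟩
        rintro G (hG | hG) hFG
        · exact absurd (hFG hvF) (hvL G hG)
        · exact hFG.antisymm hG
      refine ⟨{v}, F, Or.inr (Finset.singleton_subset_iff.2 hvF), hFfacet, ?_, ?_, ?_⟩
      · obtain ⟨a, ha⟩ := hA
        refine Finset.ssubset_iff_subset_ne.2 ⟨Finset.singleton_subset_iff.2 hvF, ?_⟩
        rintro rfl
        exact hvA (Finset.mem_singleton.1 (hAF ha) ▸ ha)
      · rintro G ⟨hG | hG, hmax⟩ hvG
        · exact absurd (Finset.singleton_subset_iff.1 hvG.1) (hvL G hG)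
        · exact hmax F hFfacet.1 hG
      · ext τ
        simp only [Set.mem_union, Set.mem_ofPred_eq, Set.mem_sdiff, Finset.singleton_subset_iff,
          Finset.subset_erase]
        have := hvL τ
        tauto

/-- If gluing a nonempty simplex `F` to a complex `L` yields a connected complex and
`F` meets `L` only inside a nonempty face `G` of `L`, then `F` meets `G`. -/
theorem inter_nonempty_of_isConnectedComplex_glue (L : Set (Finset V))
    (hL : ∀ σ ∈ L, ∀ τ : Finset V, τ ⊆ σ → τ ∈ L) {F G : Finset V} (hF : F.Nonempty)
    (hG : G.Nonempty) (hGL : G ∈ L) (hFG : ∀ σ ⊆ F, σ ∈ L → σ ⊆ G)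
    (hconn : IsConnectedComplex (L ∪ {σ | σ ⊆ F})) : (F ∩ G).Nonempty := by
  obtain ⟨u, hu⟩ := hF
  obtain ⟨w, hw⟩ := hG
  have hpath := hconn.2 u w (Or.inr (Finset.singleton_subset_iff.2 hu))
    (Or.inl (hL G hGL _ (Finset.singleton_subset_iff.2 hw)))
  by_contra hne
  have hdisj : ∀ x ∈ F, x ∉ G := fun x hxF hxG => hne ⟨x, Finset.mem_inter.2 ⟨hxF, hxG⟩⟩
  have hmem : ∀ x, Relation.ReflTransGen
      (fun a b => ({a, b} : Finset V) ∈ L ∪ {σ | σ ⊆ F}) u x → x ∈ F := by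
    intro x hx
    induction hx with
    | refl => exact hu
    | @tail b c _ hbc ihb =>
      rcases hbc with hbc | hbc
      · have hbG := hFG {b} (Finset.singleton_subset_iff.2 ihb) (hL _ hbc _ (by simp))
        exact absurd (Finset.singleton_subset_iff.1 hbG) (hdisj b ihb)
      · exact hbc (by simp)
  exact hdisj w (hmem w hpath) hw

/-- If a simplex `F` meets a complex `L` only inside a face `G` of `L`, with `F ∩ G` nonempty,
and the union is connected, then `L` is connected: the vertices outside `L` can be retracted to
a vertex of `F ∩ G`. -/
theorem isConnectedComplex_of_glue (L : Set (Finset V))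
    (hL : ∀ σ ∈ L, ∀ τ : Finset V, τ ⊆ σ → τ ∈ L) {F G : Finset V}
    (hne : (F ∩ G).Nonempty) (hGL : G ∈ L) (hFG : ∀ σ ⊆ F, σ ∈ L → σ ⊆ G)
    (hconn : IsConnectedComplex (L ∪ {σ | σ ⊆ F})) : IsConnectedComplex L := by
  classical
  obtain ⟨a, ha⟩ := hne
  have haG := (Finset.mem_inter.1 ha).2
  refine ⟨⟨a, hL G hGL _ (Finset.singleton_subset_iff.2 haG)⟩, fun u w hu hw => ?_⟩
  let r : V → V := fun x => if {x} ∈ L then x else a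
  have hr : ∀ x, {x} ∈ L → r x = x := fun x hx => if_pos hx
  have hrG : ∀ x ∈ F, r x ∈ G := by
    intro x hx
    by_cases h : {x} ∈ L
    · rw [hr x h]
      exact Finset.singleton_subset_iff.1 (hFG {x} (Finset.singleton_subset_iff.2 hx) h)
    · simpa only [r, if_neg h] using haG
  have hpath := (hconn.2 u w (Or.inl hu) (Or.inl hw)).lift
    (p := fun x y => ({x, y} : Finset V) ∈ L) r (by
      rintro x y (hxy | hxy)
      · rw [Function.onFun, hr x (hL _ hxy _ (by simp)), hr y (hL _ hxy _ (by simp))]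
        exact hxy
      · refine hL G hGL _ (Finset.insert_subset (hrG x (hxy (by simp))) ?_)
        exact Finset.singleton_subset_iff.2 (hrG y (hxy (by simp))))
  rwa [Function.onFun, hr u hu, hr w hw] at hpath

theorem genUpTo_mem_of_subset {W : Type*} {t : ℕ} (F : Fin t → Finset W) (i : Fin t) :
    ∀ σ ∈ genUpTo F i, ∀ τ : Finset W, τ ⊆ σ → τ ∈ genUpTo F i :=
  fun _ ⟨j, hj, hσ⟩ _ hτ => ⟨j, hj, hτ.trans hσ⟩

theorem genUpTo_succ {W : Type*} {t : ℕ} (F : Fin t → Finset W) (n : ℕ) (hn : n + 1 < t) :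
    genUpTo F ⟨n + 1, hn⟩ = genUpTo F ⟨n, by omega⟩ ∪ {σ | σ ⊆ F ⟨n + 1, hn⟩} := by
  ext σ
  constructor
  · rintro ⟨j, hj, hσ⟩
    rcases eq_or_ne j ⟨n + 1, hn⟩ with rfl | hne
    · exact Or.inr hσ
    · refine Or.inl ⟨j, ?_, hσ⟩
      have := Fin.val_ne_of_ne hne
      simp only [Fin.le_def] at *
      omega
  · rintro (⟨j, hj, hσ⟩ | hσ)
    · exact ⟨j, hj.trans (Fin.mk_le_mk.2 n.le_succ), hσ⟩
    · exact ⟨_, le_rfl, hσ⟩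

/-- If no set `F j` is contained in another one, then each `F j` with `j ≤ i` is a facet of
the complex they generate. -/
theorem isFacet_genUpTo {W : Type*} {t : ℕ} (F : Fin t → Finset W)
    (hF : ∀ i j, F i ⊆ F j → i = j) {i j : Fin t} (hj : j ≤ i) : IsFacet (genUpTo F i) (F j) := by
  refine ⟨⟨j, hj, subset_rfl⟩, ?_⟩
  rintro G ⟨k, -, hGk⟩ hjG
  obtain rfl := hF j k (hjG.trans hGk)
  exact hjG.antisymm hGk

theorem collapsible_simplex {F : Finset V} {v : V} (hv : v ∈ F) :
    Collapsible {σ : Finset V | σ ⊆ F} := by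
  refine ⟨{σ | σ ⊆ {v}}, ?_, v, rfl⟩
  have h := reflTransGen_collapseStep_of_glue {σ : Finset V | σ ⊆ {v}}
    (fun _ hσ _ hτ => hτ.trans hσ) (Finset.singleton_nonempty v) (Finset.Subset.refl {v}) F
    (Finset.singleton_subset_iff.2 hv) (fun _ _ hσ => hσ)
  have hsub : {σ : Finset V | σ ⊆ {v}} ⊆ {σ | σ ⊆ F} := fun _ hσ =>
    Finset.Subset.trans hσ (Finset.singleton_subset_iff.2 hv)
  rwa [Set.union_eq_right.2 hsub] at h

theorem collapsible_genUpTo {t : ℕ} (F : Fin t → Finset V) (hF : ∀ i j, F i ⊆ F j → i = j)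
    (hleaf : ∀ i : Fin t, IsLeaf (genUpTo F i) (F i)) (n : ℕ) (hn : n < t)
    (hconn : IsConnectedComplex (genUpTo F ⟨n, hn⟩)) : Collapsible (genUpTo F ⟨n, hn⟩) := by
  induction n with
  | zero =>
    have hK : genUpTo F ⟨0, hn⟩ = {σ | σ ⊆ F ⟨0, hn⟩} := by
      ext σ
      constructor
      · rintro ⟨j, hj, hσ⟩
        obtain rfl : j = ⟨0, hn⟩ := Fin.ext (Nat.le_zero.1 hj)
        exact hσ
      · exact fun hσ => ⟨_, le_rfl, hσ⟩
    rw [hK] at hconn ⊢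
    obtain ⟨v, hv⟩ := hconn.1
    exact collapsible_simplex (Finset.singleton_subset_iff.1 hv)
  | succ n ih =>
    have hn' : n < t := by omega
    have hlt : (⟨n, hn'⟩ : Fin t) < ⟨n + 1, hn⟩ := Fin.mk_lt_mk.2 n.lt_succ_self
    have hnonempty : ∀ j, (F j).Nonempty := by
      intro j
      by_contra h
      rw [Finset.not_nonempty_iff_eq_empty] at h
      have hj : ∀ k, j = k := fun k => hF j k (h ▸ Finset.empty_subset _)
      exact hlt.ne ((hj _).symm.trans (hj _))
    obtain ⟨G, hGL, hG, hFG⟩ : ∃ G ∈ genUpTo F ⟨n, hn'⟩, G.Nonempty ∧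
        ∀ σ ⊆ F ⟨n + 1, hn⟩, σ ∈ genUpTo F ⟨n, hn'⟩ → σ ⊆ G := by
      rcases (hleaf ⟨n + 1, hn⟩).2 with h | ⟨G, hGfacet, hGne, h⟩
      · have := h _ (isFacet_genUpTo F hF hlt.le)
        exact absurd (hF _ _ this.subset) hlt.ne
      · obtain ⟨j, hj, hGj⟩ := hGfacet.1
        obtain rfl := hGfacet.2 _ (isFacet_genUpTo F hF hj).1 hGj
        have hjn : j ≤ ⟨n, hn'⟩ :=
          Nat.le_of_lt_succ (lt_of_le_of_ne hj fun e => hGne (congrArg F (Fin.ext e)))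
        refine ⟨_, ⟨j, hjn, subset_rfl⟩, hnonempty j, ?_⟩
        rintro σ hσ ⟨k, hk, hσk⟩
        have hkn := hk.trans_lt hlt
        exact (Finset.subset_inter hσ hσk).trans (h _ (isFacet_genUpTo F hF hkn.le)
          fun e => hkn.ne (hF _ _ e.subset))
    have hL := genUpTo_mem_of_subset F ⟨n, hn'⟩
    rw [genUpTo_succ] at hconn ⊢
    have hne := inter_nonempty_of_isConnectedComplex_glue _ hL (hnonempty _) hG hGL hFG hconn
    obtain ⟨K', hK', hv⟩ := ih hn' (isConnectedComplex_of_glue _ hL hne hGL hFG hconn)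
    exact ⟨K', (reflTransGen_collapseStep_of_glue _ hL hne
      (hL G hGL _ Finset.inter_subset_right) _ Finset.inter_subset_left
      fun σ hσ hσL => Finset.subset_inter hσ (hFG σ hσ hσL)).trans hK', hv⟩

/-- Every quasi-tree (connected quasi-forest) is collapsible. -/
theorem collapsible_of_quasiTree (K : Set (Finset V))
    (hdc : ∀ σ ∈ K, ∀ τ : Finset V, τ ⊆ σ → τ ∈ K)
    (hqf : IsQuasiForest K) (hconn : IsConnectedComplex K) :
    Collapsible K := by
  obtain ⟨t, F, hinj, hfacet, hcover, hleaf⟩ := hqf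
  have hFK : ∀ i, IsFacet K (F i) := fun i => (hfacet _).2 ⟨i, rfl⟩
  obtain ⟨v, hv⟩ := hconn.1
  obtain ⟨i, -⟩ := hcover _ hv
  have ht : t - 1 < t := by have := i.isLt; omega
  have hK : K = genUpTo F ⟨t - 1, ht⟩ := by
    ext σ
    constructor
    · intro hσ
      obtain ⟨j, hj⟩ := hcover σ hσ
      exact ⟨j, Nat.le_sub_one_of_lt j.isLt, hj⟩
    · rintro ⟨j, -, hj⟩
      exact hdc _ (hFK j).1 _ hj
  rw [hK] at hconn ⊢
  exact collapsible_genUpTo F (fun i j h => hinj ((hFK i).2 _ (hFK j).1 h)) hleaf _ ht hconn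
end

section
/- For all integers r, q ≥ 1, the simplicial complex L^r_q is a quasi-tree. -/
/-!
STATEMENT 3: For all integers r, q ≥ 1, the simplicial complex L^r_q is a quasi-tree
(a connected quasi-forest).
-/

open Finset

variable {V : Type*} [DecidableEq V]

/-- The set `F^r_i`, with `s = ⌈r/2⌉ = (r+1)/2`. -/
def Fset (r q : ℕ) (i : Fin q) : Set (Fin q → ℕ) :=
  {a | (∑ k, a k = r) ∧ a i ≤ max (r - 1) ((r + 1) / 2) ∧
    ∀ j, j ≠ i → a j ≤ (r + 1) / 2}

/-- The set `G^r_i`. -/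
def Gset (r q : ℕ) (i : Fin q) : Set (Fin q → ℕ) :=
  {a | (∑ k, a k = r) ∧ r - 1 ≤ a i}

/-- The faces of the simplicial complex `L^r_q`: all (finite) subsets of the sets
`F^r_1,…,F^r_q, G^r_1,…,G^r_q`. -/
def LFaces (r q : ℕ) : Set (Finset (Fin q → ℕ)) :=
  {σ | ∃ i : Fin q, (σ : Set (Fin q → ℕ)) ⊆ Fset r q i ∨ (σ : Set (Fin q → ℕ)) ⊆ Gset r q i}

/-- The sets `F i` form an antichain ordered so that the traces on each `F i` of all earlier
members lie in a single earlier member. -/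
def IsLeafOrder {t : ℕ} (F : Fin t → Finset V) : Prop :=
  (∀ i j, F i ⊆ F j → i = j) ∧
    ∀ i : Fin t, (i : ℕ) ≠ 0 → ∃ j < i, ∀ k < i, F i ∩ F k ⊆ F j

/-- Replacing a member `F g` by a larger set that meets the other members only inside `F g`
preserves leaf orders. -/
theorem IsLeafOrder.update {t : ℕ} {F : Fin t → Finset V} (hF : IsLeafOrder F)
    {X : Finset V} (hX : ∀ i, ¬ X ⊆ F i) {g : Fin t} (hg : ∀ i, X ∩ F i ⊆ F g)
    (hgX : F g ⊆ X) : IsLeafOrder (Function.update F g X) := by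
  obtain ⟨hanti, hleaf⟩ := hF
  refine ⟨fun i j hij => ?_, fun i hi => ?_⟩
  · by_cases h1 : i = g
    · subst h1
      by_cases h2 : j = i
      · exact h2.symm
      · simp only [Function.update_self, Function.update_of_ne h2] at hij
        exact absurd hij (hX j)
    · by_cases h2 : j = g
      · subst h2
        simp only [Function.update_self, Function.update_of_ne h1] at hij
        exact hanti i j fun x hx => hg i (mem_inter.2 ⟨hij hx, hx⟩)
      · simp only [Function.update_of_ne h1, Function.update_of_ne h2] at hij
        exact hanti i j hij
  · obtain ⟨j, hj, hjk⟩ := hleaf i hi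
    have hsub : F j ⊆ Function.update F g X j := by
      by_cases h : j = g
      · subst h; simpa using hgX
      · simp [Function.update_of_ne h]
    refine ⟨j, hj, fun k hk x hx => hsub (hjk k hk ?_)⟩
    rw [mem_inter] at hx ⊢
    obtain ⟨hxi, hxk⟩ := hx
    by_cases h1 : i = g
    · subst h1
      rw [Function.update_of_ne hk.ne] at hxk
      rw [Function.update_self] at hxi
      exact ⟨hg k (mem_inter.2 ⟨hxi, hxk⟩), hxk⟩
    · rw [Function.update_of_ne h1] at hxi
      by_cases h2 : k = g
      · subst h2
        rw [Function.update_self] at hxk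
        exact ⟨hxi, hg i (mem_inter.2 ⟨hxk, hxi⟩)⟩
      · rw [Function.update_of_ne h2] at hxk
        exact ⟨hxi, hxk⟩

/-- Appending a new set that meets all members inside a member it does not contain preserves
leaf orders. -/
theorem IsLeafOrder.snoc {t : ℕ} {F : Fin t → Finset V} (hF : IsLeafOrder F)
    {X : Finset V} (hX : ∀ i, ¬ X ⊆ F i) {g : Fin t} (hg : ∀ i, X ∩ F i ⊆ F g)
    (hgX : ¬ F g ⊆ X) : IsLeafOrder (Fin.snoc F X : Fin (t + 1) → Finset V) := by
  obtain ⟨hanti, hleaf⟩ := hF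
  refine ⟨fun i j => ?_, fun i => ?_⟩
  · refine Fin.lastCases ?_ (fun i => ?_) i <;> refine Fin.lastCases ?_ (fun j => ?_) j
    · simp
    · intro h
      simp only [Fin.snoc_last, Fin.snoc_castSucc] at h
      exact absurd h (hX j)
    · intro h
      simp only [Fin.snoc_last, Fin.snoc_castSucc] at h
      have hig : i = g := hanti i g fun x hx => hg i (mem_inter.2 ⟨h hx, hx⟩)
      exact absurd (hig ▸ h) hgX
    · intro h
      simp only [Fin.snoc_castSucc] at h
      rw [hanti i j h]
  · refine Fin.lastCases (fun _ => ?_) (fun i hi => ?_) i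
    · refine ⟨g.castSucc, Fin.castSucc_lt_last g, fun k => ?_⟩
      refine Fin.lastCases (fun hk => absurd hk (lt_irrefl _)) (fun k _ => ?_) k
      simpa only [Fin.snoc_last, Fin.snoc_castSucc] using hg k
    · obtain ⟨j, hj, hjk⟩ := hleaf i (by simpa using hi)
      refine ⟨j.castSucc, by simpa using hj, fun k => ?_⟩
      refine Fin.lastCases (fun hk => absurd hk (Fin.castSucc_lt_last i).not_gt)
        (fun k hk => ?_) k
      simpa only [Fin.snoc_castSucc] using hjk k (by simpa using hk)

/-- A sequence of sets, possibly with inclusions among them, in which the traces on each member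
of all earlier members lie in a single earlier member generates the same complex as some
leaf order. -/
theorem exists_isLeafOrder {n : ℕ} (A : Fin n → Finset V)
    (hA : ∀ i : Fin n, (i : ℕ) ≠ 0 → ∃ j < i, ∀ k < i, A i ∩ A k ⊆ A j) :
    ∃ (t : ℕ) (F : Fin t → Finset V), IsLeafOrder F ∧
      ∀ σ, (∃ i, σ ⊆ F i) ↔ ∃ i, σ ⊆ A i := by
  induction n with
  | zero => exact ⟨0, A, ⟨fun i => i.elim0, fun i => i.elim0⟩, fun σ => Iff.rfl⟩
  | succ n ih =>
    rcases Nat.eq_zero_or_pos n with rfl | hn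
    · exact ⟨1, A, ⟨fun i j _ => Subsingleton.elim i j, fun i hi => absurd (by omega) hi⟩,
        fun σ => Iff.rfl⟩
    obtain ⟨t, F, hF, hgen⟩ := ih (fun i => A i.castSucc) fun i hi => by
      obtain ⟨j, hj, hjk⟩ := hA i.castSucc (by simpa using hi)
      have hjn : (j : ℕ) < n := lt_trans (Fin.lt_def.1 hj) (by simp)
      exact ⟨⟨j, hjn⟩, Fin.lt_def.2 (Fin.lt_def.1 hj),
        fun k hk => hjk k.castSucc (by simpa using hk)⟩
    obtain ⟨j, hj, hjk⟩ := hA (Fin.last n) (by simpa using hn.ne')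
    obtain ⟨g, hg⟩ := (hgen (A j)).2 ⟨⟨j, Fin.lt_def.1 hj⟩, subset_rfl⟩
    set X := A (Fin.last n)
    have hXF : ∀ i, X ∩ F i ⊆ F g := fun i => by
      obtain ⟨k, hk⟩ := (hgen (F i)).1 ⟨i, subset_rfl⟩
      exact (inter_subset_inter_left hk).trans
        ((hjk k.castSucc (Fin.castSucc_lt_last k)).trans hg)
    have hsplit : ∀ σ, (∃ i, σ ⊆ A i) ↔ (∃ i, σ ⊆ F i) ∨ σ ⊆ X := fun σ => by
      rw [hgen σ]
      constructor
      · rintro ⟨i, hi⟩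
        induction i using Fin.lastCases with
        | last => exact Or.inr hi
        | cast i => exact Or.inl ⟨i, hi⟩
      · rintro (⟨i, hi⟩ | h)
        · exact ⟨i.castSucc, hi⟩
        · exact ⟨Fin.last n, h⟩
    simp only [hsplit]
    by_cases hX : ∃ i, X ⊆ F i
    · obtain ⟨i, hi⟩ := hX
      exact ⟨t, F, hF, fun σ => ⟨Or.inl, fun h => h.elim id fun h => ⟨i, h.trans hi⟩⟩⟩
    push Not at hX
    by_cases hgX : F g ⊆ X
    · refine ⟨t, _, hF.update hX hXF hgX, fun σ => ⟨?_, ?_⟩⟩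
      · rintro ⟨i, hi⟩
        by_cases h : i = g
        · subst h; exact Or.inr (by simpa using hi)
        · exact Or.inl ⟨i, by simpa [Function.update_of_ne h] using hi⟩
      · rintro (⟨i, hi⟩ | h)
        · by_cases h : i = g
          · subst h; exact ⟨i, by simpa using hi.trans hgX⟩
          · exact ⟨i, by simpa [Function.update_of_ne h] using hi⟩
        · exact ⟨g, by simpa using h⟩
    · refine ⟨t + 1, _, hF.snoc hX hXF hgX, fun σ => ⟨?_, ?_⟩⟩
      · rintro ⟨i, hi⟩
        induction i using Fin.lastCases with
        | last => exact Or.inr (by simpa using hi)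
        | cast i => exact Or.inl ⟨i, by simpa using hi⟩
      · rintro (⟨i, hi⟩ | h)
        · exact ⟨i.castSucc, by simpa using hi⟩
        · exact ⟨Fin.last t, by simpa using h⟩

theorem IsLeafOrder.isFacet_genUpTo {t : ℕ} {F : Fin t → Finset V} (hF : IsLeafOrder F)
    (i : Fin t) (σ : Finset V) : IsFacet (genUpTo F i) σ ↔ ∃ j ≤ i, σ = F j := by
  constructor
  · rintro ⟨⟨j, hj, hσ⟩, hmax⟩
    exact ⟨j, hj, hmax _ ⟨j, hj, subset_rfl⟩ hσ⟩
  · rintro ⟨j, hj, rfl⟩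
    refine ⟨⟨j, hj, subset_rfl⟩, ?_⟩
    rintro G ⟨k, -, hk⟩ hG
    obtain rfl := hF.1 j k (hG.trans hk)
    exact hG.antisymm hk

/-- A complex generated by a leaf order is a quasi-forest. -/
theorem IsLeafOrder.isQuasiForest {t : ℕ} {F : Fin t → Finset V} (hF : IsLeafOrder F)
    {K : Set (Finset V)} (hK : ∀ σ, (∃ i, σ ⊆ F i) ↔ σ ∈ K) : IsQuasiForest K := by
  refine ⟨t, F, fun i j h => hF.1 i j h.subset, fun σ => ⟨?_, ?_⟩, fun σ hσ => (hK σ).2 hσ,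
    fun i => ⟨(hF.isFacet_genUpTo i _).2 ⟨i, le_rfl, rfl⟩, ?_⟩⟩
  · rintro ⟨hσ, hmax⟩
    obtain ⟨i, hi⟩ := (hK σ).2 hσ
    exact ⟨i, hmax _ ((hK _).1 ⟨i, subset_rfl⟩) hi⟩
  · rintro ⟨i, rfl⟩
    refine ⟨(hK _).1 ⟨i, subset_rfl⟩, fun G hG hiG => ?_⟩
    obtain ⟨k, hk⟩ := (hK G).2 hG
    obtain rfl := hF.1 i k (hiG.trans hk)
    exact hiG.antisymm hk
  · simp only [hF.isFacet_genUpTo]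
    by_cases hi : (i : ℕ) = 0
    · left
      rintro H ⟨j, hj, rfl⟩
      have : j = i := Fin.ext (by have := Fin.le_def.1 hj; omega)
      rw [this]
    · right
      obtain ⟨j, hj, hjk⟩ := hF.2 i hi
      refine ⟨F j, ⟨j, hj.le, rfl⟩, fun h => hj.ne (hF.1 j i h.subset), ?_⟩
      rintro H ⟨k, hk, rfl⟩ hne
      exact hjk k (lt_of_le_of_ne hk fun h => hne (by rw [h]))

theorem Fset_finite (r q : ℕ) (i : Fin q) : (Fset r q i).Finite :=
  (finite_toSet (piAntidiag univ r)).subset fun a ha => by simpa using ha.1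

theorem Gset_finite (r q : ℕ) (i : Fin q) : (Gset r q i).Finite :=
  (finite_toSet (piAntidiag univ r)).subset fun a ha => by simpa using ha.1

theorem mem_Fset_of_mem_Fset_of_mem_Fset {r q : ℕ} {i j : Fin q} (hij : i ≠ j) (k : Fin q)
    {a : Fin q → ℕ} (hi : a ∈ Fset r q i) (hj : a ∈ Fset r q j) : a ∈ Fset r q k := by
  have hle : ∀ l, a l ≤ (r + 1) / 2 := fun l => by
    by_cases h : l = i
    · exact h ▸ hj.2.2 i hij
    · exact hi.2.2 l h
  exact ⟨hi.1, (hle k).trans (le_max_right _ _), fun l _ => hle l⟩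

theorem add_le_of_sum_eq {r q : ℕ} {a : Fin q → ℕ} (ha : ∑ k, a k = r) {i j : Fin q}
    (hij : i ≠ j) : a i + a j ≤ r := by
  rw [← ha, ← sum_pair hij]
  exact sum_le_sum_of_subset (subset_univ _)

theorem le_of_sum_eq {r q : ℕ} {a : Fin q → ℕ} (ha : ∑ k, a k = r) (i : Fin q) : a i ≤ r :=
  ha ▸ single_le_sum (fun _ _ => Nat.zero_le _) (mem_univ i)

theorem mem_Fset_of_mem_Gset {r q : ℕ} (hr : 1 ≤ r) {i j : Fin q} (hij : i ≠ j)
    {a : Fin q → ℕ} (hi : a ∈ Gset r q i) (hj : a ∈ Fset r q j ∨ a ∈ Gset r q j) :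
    a ∈ Fset r q i := by
  obtain ⟨hsum, hi⟩ := hi
  have hai := le_of_sum_eq hsum i
  refine ⟨hsum, ?_, fun k hk => ?_⟩
  · rcases hj with ⟨-, -, hj⟩ | ⟨-, hj⟩
    · exact (hj i hij).trans (le_max_right _ _)
    · have := add_le_of_sum_eq hsum hij
      omega
  · have := add_le_of_sum_eq hsum hk
    omega

theorem isQuasiForest_LFaces {r : ℕ} (q : ℕ) (hr : 1 ≤ r) : IsQuasiForest (LFaces r q) := by
  obtain ⟨t, F, hF, hgen⟩ := exists_isLeafOrder
    (Fin.append (fun i => (Fset_finite r q i).toFinset) fun i => (Gset_finite r q i).toFinset)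
    (fun i => by
      induction i using Fin.addCases with
      | left i =>
        intro hi
        rw [Fin.val_castAdd] at hi
        have hq : 0 < q := i.pos
        refine ⟨Fin.castAdd q ⟨0, hq⟩, by rw [Fin.lt_def]; simp; omega, fun k => ?_⟩
        induction k using Fin.addCases with
        | left k =>
          intro hk x hx
          simp only [Fin.append_left, mem_inter, Set.Finite.mem_toFinset] at hx ⊢
          refine mem_Fset_of_mem_Fset_of_mem_Fset ?_ _ hx.1 hx.2
          rintro rfl
          exact lt_irrefl _ hk
        | right k =>
          intro hk
          rw [Fin.lt_def] at hk
          simp at hk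
          omega
      | right i =>
        intro _
        refine ⟨Fin.castAdd q i, by rw [Fin.lt_def]; simp; omega, fun k => ?_⟩
        induction k using Fin.addCases with
        | left k =>
          intro _ x hx
          simp only [Fin.append_left, Fin.append_right, mem_inter, Set.Finite.mem_toFinset]
            at hx ⊢
          by_cases h : i = k
          · exact h ▸ hx.2
          · exact mem_Fset_of_mem_Gset hr h hx.1 (Or.inl hx.2)
        | right k =>
          intro hk x hx
          simp only [Fin.append_left, Fin.append_right, mem_inter, Set.Finite.mem_toFinset]
            at hx ⊢
          refine mem_Fset_of_mem_Gset hr ?_ hx.1 (Or.inr hx.2)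
          rintro rfl
          exact lt_irrefl _ hk)
  refine hF.isQuasiForest fun σ => (hgen σ).trans ⟨?_, ?_⟩
  · rintro ⟨i, hi⟩
    induction i using Fin.addCases with
    | left i => exact ⟨i, Or.inl (by simpa using hi)⟩
    | right i =>
      rw [Fin.append_right] at hi
      exact ⟨i, Or.inr (by simpa using hi)⟩
  · rintro ⟨i, hi | hi⟩
    · exact ⟨Fin.castAdd q i, by simpa using hi⟩
    · exact ⟨Fin.natAdd q i, by rw [Fin.append_right]; simpa using hi⟩

theorem sum_single_add_single {q : ℕ} (i j : Fin q) (m n : ℕ) :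
    ∑ k, (Pi.single i m + Pi.single j n : Fin q → ℕ) k = m + n := by
  simp [sum_add_distrib]

theorem single_add_single_mem_Fset {r q : ℕ} {i j : Fin q} (hij : i ≠ j) (k : Fin q) :
    (Pi.single i ((r + 1) / 2) + Pi.single j (r - (r + 1) / 2) : Fin q → ℕ) ∈ Fset r q k := by
  have hle : ∀ l, (Pi.single i ((r + 1) / 2) + Pi.single j (r - (r + 1) / 2) : Fin q → ℕ) l
      ≤ (r + 1) / 2 := fun l => by
    simp only [Pi.add_apply, Pi.single_apply]
    split_ifs <;> omega
  exact ⟨by rw [sum_single_add_single]; omega, (hle k).trans (le_max_right _ _),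
    fun l _ => hle l⟩

theorem exists_mem_Fset_and_mem_Gset {r q : ℕ} (hr : 1 ≤ r) {i j : Fin q} (hij : i ≠ j) :
    ∃ c, c ∈ Fset r q i ∧ c ∈ Gset r q i := by
  have hsum : ∑ k, (Pi.single i (r - 1) + Pi.single j 1 : Fin q → ℕ) k = r := by
    rw [sum_single_add_single]; omega
  have hi : (Pi.single i (r - 1) + Pi.single j 1 : Fin q → ℕ) i = r - 1 := by
    simp [hij]
  refine ⟨_, ⟨hsum, hi.le.trans (le_max_left _ _), fun k hk => ?_⟩, hsum, hi.ge⟩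
  simp only [Pi.add_apply, Pi.single_apply, if_neg hk]
  split_ifs <;> omega

theorem isConnectedComplex_LFaces {r q : ℕ} (hr : 1 ≤ r) (hq : 1 ≤ q) :
    IsConnectedComplex (LFaces r q) := by
  have hmem : ∀ {v : Fin q → ℕ}, {v} ∈ LFaces r q → ∃ i, v ∈ Fset r q i ∨ v ∈ Gset r q i := by
    rintro v ⟨i, hi⟩
    exact ⟨i, by simpa using hi⟩
  refine ⟨⟨Pi.single ⟨0, hq⟩ r, ⟨0, hq⟩, Or.inr ?_⟩, fun u v hu hv => ?_⟩
  · simp [Gset]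
  rcases hq.eq_or_lt with rfl | hq
  · have hval : ∀ {w : Fin 1 → ℕ}, {w} ∈ LFaces r 1 → ∑ k, w k = r := fun hw => by
      obtain ⟨i, hi | hi⟩ := hmem hw <;> exact hi.1
    have huv : u = v := funext fun k => by
      have h1 := hval hu
      have h2 := hval hv
      rw [Fin.sum_univ_one] at h1 h2
      rw [Subsingleton.elim k 0, h1, h2]
    rw [huv]
  have hF : ∀ {a b : Fin q → ℕ} (i), a ∈ Fset r q i → b ∈ Fset r q i →
      ({a, b} : Finset (Fin q → ℕ)) ∈ LFaces r q := fun i ha hb =>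
    ⟨i, Or.inl (by simp [Set.insert_subset_iff, ha, hb])⟩
  have hG : ∀ {a b : Fin q → ℕ} (i), a ∈ Gset r q i → b ∈ Gset r q i →
      ({a, b} : Finset (Fin q → ℕ)) ∈ LFaces r q := fun i ha hb =>
    ⟨i, Or.inr (by simp [Set.insert_subset_iff, ha, hb])⟩
  have hsymm : Std.Symm fun a b : Fin q → ℕ => ({a, b} : Finset (Fin q → ℕ)) ∈ LFaces r q :=
    ⟨fun a b h => by simpa only [pair_comm] using h⟩
  have h01 : (⟨0, by omega⟩ : Fin q) ≠ ⟨1, hq⟩ := by simp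
  have hbase := single_add_single_mem_Fset (r := r) h01
  have hjoin : ∀ {w : Fin q → ℕ}, {w} ∈ LFaces r q → Relation.ReflTransGen
      (fun a b => ({a, b} : Finset (Fin q → ℕ)) ∈ LFaces r q) w _ := fun {w} hw => by
    obtain ⟨i, hi | hi⟩ := hmem hw
    · exact .single (hF i hi (hbase i))
    · have : Nontrivial (Fin q) := ⟨_, _, h01⟩
      obtain ⟨j, hj⟩ := exists_ne i
      obtain ⟨c, hcF, hcG⟩ := exists_mem_Fset_and_mem_Gset hr hj.symm
      exact .head (hG i hi hcG) (.single (hF i hcF (hbase i)))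
  exact (hjoin hu).trans (Relation.ReflTransGen.stdSymm.symm _ _ (hjoin hv))

/-- `L^r_q` is a quasi-tree. -/
theorem Lrq_isQuasiTree (r q : ℕ) (hr : 1 ≤ r) (hq : 1 ≤ q) :
    IsQuasiForest (LFaces r q) ∧ IsConnectedComplex (LFaces r q) :=
  ⟨isQuasiForest_LFaces q hr, isConnectedComplex_LFaces hr hq⟩
end

section
/- Let q ≤ 3 and let m_1,…,m_q be square-free monomials forming a minimal generating set (m_i does not divide m_j for i ≠ j). For any r ≥ 1, if a, b ∈ N^r_q and m^a divides m^b, then a = b. -/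
/-!
STATEMENT 4: Let q ≤ 3 and let m_1,…,m_q be square-free monomials forming a minimal
generating set. For any r ≥ 1, if a, b ∈ N^r_q and m^a divides m^b, then a = b.

Monomials in k[x_1,…,x_n] are identified with their exponent vectors in ℕ^n;
divisibility is the componentwise order.
-/

open Finset

/-- The exponent vector of `m^a = m_1^{a_1} ⋯ m_q^{a_q}`. -/
def mpow {n q : ℕ} (m : Fin q → Fin n → ℕ) (a : Fin q → ℕ) : Fin n → ℕ :=
  fun k => ∑ j, a j * m j k

/-- If the square-free monomial `u` does not divide `v`, some variable divides `u` but not `v`. -/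
lemma exists_eq_one_and_eq_zero_of_not_le {ι : Type*} {u v : ι → ℕ} (hu : ∀ k, u k ≤ 1)
    (h : ¬ u ≤ v) : ∃ k, u k = 1 ∧ v k = 0 := by
  rw [Pi.le_def, not_forall] at h
  obtain ⟨k, hk⟩ := h
  have := hu k
  exact ⟨k, by omega, by omega⟩

theorem eq_of_mpow_dvd_of_q_le_three {n q r : ℕ} (hq : q ≤ 3) (hr : 1 ≤ r)
    (m : Fin q → Fin n → ℕ)
    (hsf : ∀ j k, m j k ≤ 1)
    (hmin : ∀ i j, i ≠ j → ¬ m i ≤ m j)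
    (a b : Fin q → ℕ) (ha : ∑ i, a i = r) (hb : ∑ i, b i = r)
    (hdvd : mpow m a ≤ mpow m b) :
    a = b := by
  have key : ∀ i j, i ≠ j → ∃ k, m i k = 1 ∧ m j k = 0 := fun i j hij =>
    exists_eq_one_and_eq_zero_of_not_le (hsf i) (hmin i j hij)
  have hle : ∀ k, ∑ j, a j * m j k ≤ ∑ j, b j * m j k := hdvd
  interval_cases q
  · exact Subsingleton.elim a b
  · simp only [Fin.sum_univ_one] at ha hb
    ext i
    rw [Subsingleton.elim i 0, ha, hb]
  · simp only [Fin.sum_univ_two] at ha hb hle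
    obtain ⟨k, hk, hk'⟩ := key 0 1 (by decide)
    obtain ⟨l, hl, hl'⟩ := key 1 0 (by decide)
    have h₁ := hle k
    have h₂ := hle l
    simp only [hk, hk', hl, hl', mul_one, mul_zero, add_zero, zero_add] at h₁ h₂
    ext i
    fin_cases i <;> simp only [Fin.zero_eta, Fin.mk_one] <;> omega
  · simp only [Fin.sum_univ_three] at ha hb hle
    -- The variable separating `m i` from `m j` contributes `a i ≤ b i` or the same with the
    -- third index added on both sides.
    have sep : ∀ i j l, i ≠ j →
        (∀ f : Fin 3 → ℕ, f 0 + f 1 + f 2 = f i + f j + f l) →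
        a i ≤ b i ∨ a i + a l ≤ b i + b l := by
      intro i j l hij hperm
      obtain ⟨k, hk, hk'⟩ := key i j hij
      have h := hle k
      rw [hperm fun x => a x * m x k, hperm fun x => b x * m x k, hk, hk'] at h
      rcases Nat.le_one_iff_eq_zero_or_eq_one.mp (hsf l k) with hl | hl <;>
        rw [hl] at h <;> omega
    have h₀₁ := sep 0 1 2 (by decide) (fun f => by ring)
    have h₀₂ := sep 0 2 1 (by decide) (fun f => by ring)
    have h₁₀ := sep 1 0 2 (by decide) (fun f => by ring)
    have h₁₂ := sep 1 2 0 (by decide) (fun f => by ring)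
    have h₂₀ := sep 2 0 1 (by decide) (fun f => by ring)
    have h₂₁ := sep 2 1 0 (by decide) (fun f => by ring)
    ext i
    fin_cases i <;> simp only [Fin.zero_eta, Fin.mk_one, Fin.reduceFinMk] <;> omega
end

section
/- Let r ≥ 1 and let m_1,…,m_q be square-free monomials forming a minimal generating set. For any i ∈ {1,…,q} and a ∈ N^r_q, if m^a divides m_i^r, then a = r·e_i. -/
/-!
STATEMENT 5: Let r ≥ 1 and let m_1,…,m_q be square-free monomials forming a minimal
generating set. For any i and a ∈ N^r_q, if m^a divides m_i^r, then a = r·e_i.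

Monomials are identified with their exponent vectors in ℕ^n; divisibility is the
componentwise order.
-/

open Finset

theorem eq_single_of_mpow_dvd_pow {n q r : ℕ} (hr : 1 ≤ r)
    (m : Fin q → Fin n → ℕ)
    (hsf : ∀ j k, m j k ≤ 1)
    (hmin : ∀ i j, i ≠ j → ¬ m i ≤ m j)
    (i : Fin q) (a : Fin q → ℕ) (ha : ∑ j, a j = r)
    (hdvd : mpow m a ≤ fun k => r * m i k) :
    a = Pi.single i r := by
  have hzero : ∀ j, j ≠ i → a j = 0 := by
    intro j hj
    by_contra haj
    refine hmin j i hj fun k => ?_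
    rcases Nat.eq_zero_or_pos (m i k) with hk | hk
    · have hsum : ∑ l, a l * m l k ≤ r * m i k := hdvd k
      have hterm : a j * m j k ≤ ∑ l, a l * m l k :=
        single_le_sum (f := fun l => a l * m l k) (fun _ _ => Nat.zero_le _) (mem_univ j)
      rw [hk, mul_zero] at hsum
      have hprod : a j * m j k = 0 := Nat.le_zero.mp (hterm.trans hsum)
      exact ((mul_eq_zero.mp hprod).resolve_left haj).le.trans (Nat.zero_le _)
    · exact (hsf j k).trans hk
  have hai : a i = r := by
    rw [← ha, Fintype.sum_eq_single i hzero]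
  funext j
  by_cases hj : j = i
  · subst hj
    rw [Pi.single_eq_same, hai]
  · rw [Pi.single_eq_of_ne hj, hzero j hj]
end

section
/- Let r ≥ 1, q ≥ 2, and let m_1,…,m_q be square-free monomials forming a minimal generating set. Suppose i ∈ {1,…,q} and M is a monomial in LCM(I^r) such that m_i^{r−1} divides M and M ≠ m_i^r. Then there exists j ∈ {1,…,q} with j ≠ i such that m_j divides M and, for every a ∈ N^r_q, m^a divides m_i^{r−1}·m_j if and only if a = (r−1)·e_i + e_j. -/
/-!
STATEMENT 6: Let r ≥ 1, q ≥ 2, and let m_1,…,m_q be square-free monomials forming a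
minimal generating set. Suppose i ∈ [q] and M ∈ LCM(I^r) with m_i^{r−1} ∣ M and
M ≠ m_i^r. Then there exists j ≠ i such that m_j ∣ M and, for every a ∈ N^r_q,
m^a ∣ m_i^{r−1}·m_j ↔ a = (r−1)·e_i + e_j.

Monomials are identified with their exponent vectors in ℕ^n; divisibility is the
componentwise order, and the lcm is the componentwise maximum.
-/

open Finset

/-- `LCM(I^r)`: the monomials arising as least common multiples of nonempty subsets of
`{m^a : a ∈ N^r_q}`. -/
def lcmLattice {n q : ℕ} (m : Fin q → Fin n → ℕ) (r : ℕ) : Set (Fin n → ℕ) :=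
  {M | ∃ T : Finset (Fin q → ℕ), T.Nonempty ∧ (∀ a ∈ T, ∑ j, a j = r) ∧
    M = fun k => T.sup fun a => mpow m a k}

/-- The degree of the part of `m l` lying outside the support of `m i`. -/
def excess {n q : ℕ} (m : Fin q → Fin n → ℕ) (i l : Fin q) : ℕ :=
  ∑ k, (1 - m i k) * m l k

theorem mpow_single_add_single {n q : ℕ} (m : Fin q → Fin n → ℕ) (i j : Fin q) (s t : ℕ)
    (k : Fin n) :
    mpow m (Pi.single i s + Pi.single j t) k = s * m i k + t * m j k := by
  simp [mpow, add_mul, Finset.sum_add_distrib, Pi.single_apply]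

theorem mul_le_mpow {n q : ℕ} (m : Fin q → Fin n → ℕ) (a : Fin q → ℕ) (l : Fin q)
    (k : Fin n) : a l * m l k ≤ mpow m a k :=
  Finset.single_le_sum (f := fun l => a l * m l k) (fun _ _ => Nat.zero_le _)
    (Finset.mem_univ l)

theorem le_mpow_of_pos {n q : ℕ} (m : Fin q → Fin n → ℕ) {a : Fin q → ℕ} {l : Fin q}
    (hl : 0 < a l) : m l ≤ mpow m a :=
  fun k => (Nat.le_mul_of_pos_left _ hl).trans (mul_le_mpow m a l k)

theorem excess_self {n q : ℕ} {m : Fin q → Fin n → ℕ} (hsf : ∀ j k, m j k ≤ 1)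
    (i : Fin q) : excess m i i = 0 := by
  refine Finset.sum_eq_zero fun k _ => ?_
  have := hsf i k
  interval_cases m i k <;> rfl

theorem excess_pos {n q : ℕ} {m : Fin q → Fin n → ℕ} (hsf : ∀ j k, m j k ≤ 1)
    {i l : Fin q} (h : ¬ m l ≤ m i) : 0 < excess m i l := by
  obtain ⟨k, hk⟩ : ∃ k, m i k < m l k := by simpa [Pi.le_def] using h
  refine Finset.sum_pos' (fun _ _ => Nat.zero_le _) ⟨k, Finset.mem_univ k, ?_⟩
  have := hsf l k
  exact Nat.mul_pos (by omega) (by omega)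

theorem sum_mul_excess {n q : ℕ} (m : Fin q → Fin n → ℕ) (i : Fin q) (a : Fin q → ℕ) :
    ∑ l, a l * excess m i l = ∑ k, (1 - m i k) * mpow m a k := by
  simp only [excess, mpow, Finset.mul_sum]
  rw [Finset.sum_comm]
  exact Finset.sum_congr rfl fun _ _ => Finset.sum_congr rfl fun _ _ => by ring

theorem sum_mul_excess_le {n q : ℕ} {m : Fin q → Fin n → ℕ} (hsf : ∀ j k, m j k ≤ 1)
    {i j : Fin q} {s : ℕ} {a : Fin q → ℕ}
    (h : mpow m a ≤ mpow m (Pi.single i s + Pi.single j 1)) :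
    ∑ l, a l * excess m i l ≤ excess m i j := by
  calc ∑ l, a l * excess m i l
      = ∑ k, (1 - m i k) * mpow m a k := sum_mul_excess m i a
    _ ≤ ∑ k, (1 - m i k) * mpow m (Pi.single i s + Pi.single j 1) k :=
        Finset.sum_le_sum fun k _ => Nat.mul_le_mul_left _ (h k)
    _ = s * excess m i i + excess m i j := by
        simp only [mpow_single_add_single, excess, Finset.mul_sum, ← Finset.sum_add_distrib]
        exact Finset.sum_congr rfl fun _ _ => by ring
    _ = excess m i j := by rw [excess_self hsf, mul_zero, zero_add]

/-- Some generator other than `m i` divides an lcm of `r`-fold products distinct from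
`m i ^ r`. -/
theorem exists_ne_le_of_mem_lcmLattice {n q r : ℕ} {m : Fin q → Fin n → ℕ} {i : Fin q}
    {M : Fin n → ℕ} (hM : M ∈ lcmLattice m r) (hne : M ≠ fun k => r * m i k) :
    ∃ j, j ≠ i ∧ m j ≤ M := by
  obtain ⟨T, hT, hsum, rfl⟩ := hM
  by_contra! hcon
  apply hne
  have hpow : ∀ a ∈ T, ∀ k, mpow m a k = r * m i k := by
    intro a ha k
    have hzero : ∀ l, l ≠ i → a l = 0 := by
      intro l hl
      by_contra h0
      exact hcon l hl fun k => (le_mpow_of_pos m (Nat.pos_of_ne_zero h0) k).trans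
        (Finset.le_sup (f := fun a => mpow m a k) ha)
    have hai : a i = r := by
      rw [← hsum a ha, Finset.sum_eq_single i (fun l _ hl => hzero l hl) (by simp)]
    rw [mpow, Finset.sum_eq_single i (fun l _ hl => by rw [hzero l hl, zero_mul]) (by simp), hai]
  funext k
  rw [Finset.sup_congr rfl fun a ha => hpow a ha k, Finset.sup_const hT]

/-- A vector whose entries away from `i` sum to at most one is `s • e_i` or
`s • e_i + e_l`. -/
theorem eq_single_or_eq_single_add_single {q r : ℕ} {a : Fin q → ℕ} (ha : ∑ l, a l = r)
    {i : Fin q} (h : ∑ l ∈ univ.erase i, a l ≤ 1) :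
    a = Pi.single i r ∨ ∃ l, l ≠ i ∧ a = Pi.single i (r - 1) + Pi.single l 1 := by
  have htot := Finset.add_sum_erase univ a (Finset.mem_univ i)
  by_cases hz : ∀ l, l ≠ i → a l = 0
  · left
    have : ∑ l ∈ univ.erase i, a l = 0 :=
      Finset.sum_eq_zero fun l hl => hz l (Finset.ne_of_mem_erase hl)
    funext x
    by_cases hx : x = i
    · subst hx
      rw [Pi.single_eq_same]
      omega
    · rw [Pi.single_eq_of_ne hx, hz x hx]
  · right
    push Not at hz
    obtain ⟨l, hl, hl0⟩ := hz
    refine ⟨l, hl, ?_⟩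
    have hsplit := Finset.add_sum_erase (univ.erase i) a
      (Finset.mem_erase.mpr ⟨hl, Finset.mem_univ l⟩)
    funext x
    simp only [Pi.add_apply]
    by_cases hx : x = i
    · subst hx
      rw [Pi.single_eq_same, Pi.single_eq_of_ne hl.symm]
      omega
    · by_cases hxl : x = l
      · subst hxl
        rw [Pi.single_eq_same, Pi.single_eq_of_ne hl]
        omega
      · rw [Pi.single_eq_of_ne hx, Pi.single_eq_of_ne hxl]
        have := Finset.single_le_sum (f := a) (fun _ _ => Nat.zero_le _)
          (show x ∈ (univ.erase i).erase l by simp [hx, hxl])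
        omega

theorem exists_j_of_pow_sub_one_dvd {n q r : ℕ} (hr : 1 ≤ r) (hq : 2 ≤ q)
    (m : Fin q → Fin n → ℕ)
    (hsf : ∀ j k, m j k ≤ 1)
    (hmin : ∀ i j, i ≠ j → ¬ m i ≤ m j)
    (i : Fin q) (M : Fin n → ℕ) (hM : M ∈ lcmLattice m r)
    (hdvd : (fun k => (r - 1) * m i k) ≤ M)
    (hne : M ≠ fun k => r * m i k) :
    ∃ j : Fin q, j ≠ i ∧ m j ≤ M ∧
      ∀ a : Fin q → ℕ, ∑ l, a l = r →
        (mpow m a ≤ mpow m (Pi.single i (r - 1) + Pi.single j 1) ↔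
          a = Pi.single i (r - 1) + Pi.single j 1) := by
  classical
  obtain ⟨j₀, hj₀, hj₀M⟩ := exists_ne_le_of_mem_lcmLattice hM hne
  obtain ⟨j, hj, hjmin⟩ := Finset.exists_min_image
    (univ.filter fun j => j ≠ i ∧ m j ≤ M) (excess m i) ⟨j₀, by simp [hj₀, hj₀M]⟩
  simp only [Finset.mem_filter, Finset.mem_univ, true_and] at hj hjmin
  obtain ⟨hji, hjM⟩ := hj
  refine ⟨j, hji, hjM, fun a ha => ⟨fun h => ?_, fun h => h ▸ le_rfl⟩⟩
  have hout : ∑ l ∈ univ.erase i, a l ≤ 1 := by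
    have htot := Finset.add_sum_erase univ a (Finset.mem_univ i)
    obtain rfl | hr2 : r = 1 ∨ 2 ≤ r := by omega
    · omega
    have hmin_excess : ∀ l ∈ univ.erase i, a l * excess m i j ≤ a l * excess m i l := by
      intro l hl
      rcases Nat.eq_zero_or_pos (a l) with h0 | h0
      · simp [h0]
      refine Nat.mul_le_mul_left _ (hjmin l ⟨Finset.ne_of_mem_erase hl, fun k => ?_⟩)
      change m l k ≤ M k
      have hlk : m l k ≤ (r - 1) * m i k + 1 * m j k :=
        ((le_mpow_of_pos m h0 k).trans (h k)).trans_eq (mpow_single_add_single m i j _ _ k)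
      have hik : (r - 1) * m i k ≤ M k := hdvd k
      have hjk : m j k ≤ M k := hjM k
      have := hsf l k
      rcases Nat.le_one_iff_eq_zero_or_eq_one.mp (hsf i k) with hi | hi <;>
        rw [hi] at hlk hik <;> omega
    have hle : (∑ l ∈ univ.erase i, a l) * excess m i j ≤ 1 * excess m i j := by
      rw [Finset.sum_mul, one_mul]
      exact (Finset.sum_le_sum hmin_excess).trans
        ((Finset.sum_le_sum_of_subset (Finset.erase_subset _ _)).trans
          (sum_mul_excess_le hsf h))
    exact Nat.le_of_mul_le_mul_right hle (excess_pos hsf (hmin j i hji))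
  obtain rfl | ⟨l, hl, rfl⟩ := eq_single_or_eq_single_add_single ha hout
  · refine absurd (fun k => ?_) (hmin i j hji.symm)
    change m i k ≤ m j k
    have hk := (mul_le_mpow m _ i k).trans (h k)
    obtain ⟨s, rfl⟩ : ∃ s, r = s + 1 := ⟨r - 1, by omega⟩
    rw [mpow_single_add_single, Pi.single_eq_same, Nat.add_sub_cancel, add_mul] at hk
    omega
  · have hlj : l = j := by
      by_contra hlj
      refine hmin l j hlj fun k => ?_
      change m l k ≤ m j k
      have hk := h k
      simp only [mpow_single_add_single] at hk
      omega
    rw [hlj]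
end

section
/- Let m_1,…,m_q be square-free monomials forming a minimal generating set, let i ≠ j be indices in {1,…,q}, let a = (a_1,…,a_q) and b = (b_1,…,b_q) belong to N^r_q, and let α be a non-negative integer with a_i ≥ α and b_j > r − α. Then m^b does not divide m^a. -/
/-!
STATEMENT 8: Let m_1,…,m_q be square-free monomials forming a minimal generating set,
i ≠ j, a, b ∈ N^r_q, and α ≥ 0 with a_i ≥ α and b_j > r − α. Then m^b does not divide m^a.

Monomials are identified with their exponent vectors in ℕ^n; divisibility is the
componentwise order.
-/

open Finset

theorem not_dvd_of_coord_large {n q r : ℕ}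
    (m : Fin q → Fin n → ℕ)
    (hsf : ∀ j k, m j k ≤ 1)
    (hmin : ∀ i j, i ≠ j → ¬ m i ≤ m j)
    (i j : Fin q) (hij : i ≠ j)
    (a b : Fin q → ℕ) (ha : ∑ k, a k = r) (hb : ∑ k, b k = r)
    (α : ℕ) (hα : α ≤ a i) (hbj : r - α < b j) :
    ¬ mpow m b ≤ mpow m a := by
  intro hdvd
  obtain ⟨k, hk⟩ : ∃ k, m i k < m j k := by
    simpa [Pi.le_def] using hmin j i hij.symm
  have hik : m i k = 0 := by have := hsf j k; omega
  have hjk : m j k = 1 := by have := hsf j k; omega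
  have hlower : b j ≤ mpow m b k := by
    simpa [hjk, mpow] using
      single_le_sum (f := fun l => b l * m l k) (fun _ _ => Nat.zero_le _) (mem_univ j)
  have hupper : mpow m a k + a i ≤ r := by
    rw [← ha, mpow, ← sum_erase_add _ _ (mem_univ i), ← sum_erase_add _ a (mem_univ i), hik,
      mul_zero, add_zero]
    gcongr with l
    exact mul_le_of_le_one_right (Nat.zero_le _) (hsf l k)
  have hle : mpow m b k ≤ mpow m a k := hdvd k
  omega
end

section
/- Let r, q ≥ 2 be integers, and set f = |F^r_1| and b = |B^r|. Then q·(f − b) = C(q+r−1, r) − q − b, where C(n,k) denotes the binomial coefficient. -/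
/-!
STATEMENT 13: Let r, q ≥ 2 and set f = |F^r_1| and b = |B^r|. Then
q·(f − b) = C(q+r−1, r) − q − b (an identity of integers).
-/

open Finset

/-- The set `B^r`, with `s = ⌈r/2⌉ = (r+1)/2`. -/
def Bset (r q : ℕ) : Set (Fin q → ℕ) :=
  {a | (∑ k, a k = r) ∧ ∀ i, a i ≤ (r + 1) / 2}

/-- The compositions of `r` into `q` parts whose `i`-th part exceeds `⌈r/2⌉`. -/
def largeAt (r q : ℕ) (i : Fin q) : Finset (Fin q → ℕ) :=
  {a ∈ piAntidiag univ r | (r + 1) / 2 < a i}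

/-- The finset version of `Bset`. -/
def balanced (r q : ℕ) : Finset (Fin q → ℕ) :=
  {a ∈ piAntidiag univ r | ∀ i, a i ≤ (r + 1) / 2}

lemma mem_largeAt {r q : ℕ} {i : Fin q} {a : Fin q → ℕ} :
    a ∈ largeAt r q i ↔ ∑ k, a k = r ∧ (r + 1) / 2 < a i := by
  simp [largeAt]

lemma mem_balanced {r q : ℕ} {a : Fin q → ℕ} :
    a ∈ balanced r q ↔ ∑ k, a k = r ∧ ∀ i, a i ≤ (r + 1) / 2 := by
  simp [balanced]

lemma coe_balanced (r q : ℕ) : (balanced r q : Set (Fin q → ℕ)) = Bset r q := by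
  ext a
  simp [mem_balanced, Bset]

lemma add_le_sum_of_ne {q : ℕ} (a : Fin q → ℕ) {i j : Fin q} (h : i ≠ j) :
    a i + a j ≤ ∑ k, a k := by
  rw [← sum_pair h]
  exact sum_le_sum_of_subset (subset_univ _)

lemma disjoint_largeAt {r q : ℕ} {i j : Fin q} (h : i ≠ j) :
    Disjoint (largeAt r q i) (largeAt r q j) := by
  rw [disjoint_left]
  intro a hi hj
  rw [mem_largeAt] at hi hj
  have := add_le_sum_of_ne a h
  omega

lemma disjoint_balanced_largeAt (r q : ℕ) (i : Fin q) :
    Disjoint (balanced r q) (largeAt r q i) := by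
  rw [disjoint_left]
  intro a hb hi
  rw [mem_balanced] at hb
  rw [mem_largeAt] at hi
  exact absurd hi.2 (not_lt.mpr (hb.2 i))

lemma card_largeAt_le (r q : ℕ) (i j : Fin q) : #(largeAt r q i) ≤ #(largeAt r q j) := by
  refine card_le_card_of_injOn (fun a => a ∘ Equiv.swap i j) ?_ ?_
  · intro a ha
    rw [mem_coe, mem_largeAt] at ha ⊢
    refine ⟨?_, by simpa using ha.2⟩
    rw [← ha.1]
    exact Equiv.sum_comp (Equiv.swap i j) a
  · exact ((Equiv.swap i j).surjective.injective_comp_right).injOn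

lemma card_largeAt_eq (r q : ℕ) (i j : Fin q) : #(largeAt r q i) = #(largeAt r q j) :=
  (card_largeAt_le r q i j).antisymm (card_largeAt_le r q j i)

lemma card_piAntidiag_fin_eq (r q : ℕ) (i : Fin q) :
    #(piAntidiag (univ : Finset (Fin q)) r) = #(balanced r q) + q * #(largeAt r q i) := by
  have hunion : piAntidiag (univ : Finset (Fin q)) r =
      balanced r q ∪ univ.biUnion (largeAt r q) := by
    ext a
    simp only [mem_piAntidiag, mem_union, mem_biUnion, mem_balanced, mem_largeAt, mem_univ,
      true_and, implies_true, and_true, exists_and_left, ← and_or_left]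
    refine ⟨fun h => ⟨h, ?_⟩, fun h => h.1⟩
    by_contra! h'
    obtain ⟨⟨j, hj⟩, h'⟩ := h'
    exact absurd (h' j) (not_le.mpr hj)
  rw [hunion, card_union_of_disjoint, card_biUnion fun j _ k _ h => disjoint_largeAt h,
    sum_congr rfl fun j _ => card_largeAt_eq r q j i]
  · simp
  · rw [disjoint_biUnion_right]
    exact fun j _ => disjoint_balanced_largeAt r q j

lemma insert_single_Fset {r q : ℕ} (hr : 2 ≤ r) (i : Fin q) :
    insert (Pi.single i r) (Fset r q i) = (balanced r q ∪ largeAt r q i : Finset _) := by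
  ext a
  simp only [Set.mem_insert_iff, coe_union, Set.mem_union, mem_coe, mem_balanced, mem_largeAt,
    Fset, Set.mem_ofPred_eq]
  constructor
  · rintro (rfl | ⟨hsum, -, hj⟩)
    · right
      simp
      omega
    · by_cases hi : a i ≤ (r + 1) / 2
      · refine Or.inl ⟨hsum, fun j => ?_⟩
        by_cases h : j = i
        · exact h ▸ hi
        · exact hj j h
      · exact Or.inr ⟨hsum, not_le.mp hi⟩
  · rintro (⟨hsum, h⟩ | ⟨hsum, hi⟩)
    · exact Or.inr ⟨hsum, (h i).trans (le_max_right _ _), fun j _ => h j⟩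
    · by_cases hlt : a i ≤ r - 1
      · refine Or.inr ⟨hsum, hlt.trans (le_max_left _ _), fun j hj => ?_⟩
        have := add_le_sum_of_ne a hj
        omega
      · left
        have hle : a i ≤ ∑ k, a k := single_le_sum_of_canonicallyOrdered (mem_univ i)
        ext j
        by_cases h : j = i
        · subst h
          simp
          omega
        · have := add_le_sum_of_ne a h
          simp [h]
          omega

lemma ncard_Fset_add_one {r q : ℕ} (hr : 2 ≤ r) (i : Fin q) :
    (Fset r q i).ncard + 1 = #(balanced r q) + #(largeAt r q i) := by
  have hins := insert_single_Fset hr i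
  have hfin : (Fset r q i).Finite :=
    (finite_toSet _).subset (hins ▸ Set.subset_insert _ _)
  have hnot : Pi.single i r ∉ Fset r q i := by
    rintro ⟨-, h, -⟩
    rw [Pi.single_eq_same] at h
    omega
  rw [← Set.ncard_insert_of_notMem hnot hfin, hins, Set.ncard_coe_finset,
    card_union_of_disjoint (disjoint_balanced_largeAt r q i)]

lemma card_piAntidiag_fin (r q : ℕ) :
    #(piAntidiag (univ : Finset (Fin q)) r) = (q + r - 1).choose r := by
  have h := card_finsuppAntidiag_nat_eq_choose (s := (univ : Finset (Fin q))) r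
  rw [card_univ, Fintype.card_fin] at h
  rw [← h]
  refine (card_equiv Finsupp.equivFunOnFinite fun a => ?_).symm
  simp [mem_finsuppAntidiag]

theorem f_formula (r q : ℕ) (hr : 2 ≤ r) (hq : 2 ≤ q) :
    (q : ℤ) * (((Fset r q ⟨0, by omega⟩).ncard : ℤ) - ((Bset r q).ncard : ℤ)) =
      ((q + r - 1).choose r : ℤ) - (q : ℤ) - ((Bset r q).ncard : ℤ) := by
  have hF := ncard_Fset_add_one hr (⟨0, by omega⟩ : Fin q)
  have hN := card_piAntidiag_fin_eq r q ⟨0, by omega⟩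
  rw [card_piAntidiag_fin] at hN
  rw [← coe_balanced, Set.ncard_coe_finset, hN]
  have hF' := congrArg (Nat.cast : ℕ → ℤ) hF
  push_cast at hF' ⊢
  linear_combination (q : ℤ) * hF'
end

section
/- Let q ≥ 3 and r = 2, and let ε_1,…,ε_q be the extremal generators. For every nonempty face σ of the simplicial complex L^2_q and every c ∈ N^2_q: ε^c divides lcm{ε^a : a ∈ σ} if and only if c ∈ σ. -/
/-!
STATEMENT 19: Let q ≥ 3 and r = 2, and let ε_1,…,ε_q be the extremal generators. For
every nonempty face σ of the simplicial complex L^2_q and every c ∈ N^2_q: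
ε^c divides lcm{ε^a : a ∈ σ} if and only if c ∈ σ.

Monomials are identified with their exponent vectors; divisibility is the componentwise
order and lcm is the componentwise maximum. ε^a has exponent ∑_{j ∈ A} a_j at x_A.
-/

open Finset

/-- The exponent vector of `ε^a`: its exponent at `x_A` is `∑_{j ∈ A} a_j`. -/
def epow (q : ℕ) (a : Fin q → ℕ) : {A : Finset (Fin q) // A.Nonempty} → ℕ :=
  fun A => ∑ j ∈ A.1, a j

/-- Comparable functions with the same total are equal. -/
lemma eq_of_le_of_sum_eq {ι : Type*} [Fintype ι] {c a : ι → ℕ} (h : c ≤ a)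
    (hs : ∑ i, c i = ∑ i, a i) : c = a :=
  funext fun i => (Finset.sum_eq_sum_iff_of_le fun j _ => h j).1 hs i (Finset.mem_univ i)

/-- A degree-two exponent vector involving `i` has the form `e_i + e_k`. -/
lemma exists_eq_single_add_single {ι : Type*} [Fintype ι] [DecidableEq ι] {c : ι → ℕ}
    (hc : ∑ j, c j = 2) {i : ι} (hi : 1 ≤ c i) :
    ∃ k, c = Pi.single i 1 + Pi.single k 1 := by
  have hle : (Pi.single i 1 : ι → ℕ) ≤ c := by
    intro j
    by_cases h : j = i
    · subst h; simpa using hi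
    · simp [h]
  obtain ⟨d, rfl⟩ := exists_add_of_le hle
  have hd : ∑ j, d j = 1 := by
    simp only [Pi.add_apply, Finset.sum_add_distrib, Finset.sum_pi_single', Finset.mem_univ,
      if_true] at hc
    omega
  obtain ⟨k, -, hk⟩ := Finset.exists_ne_zero_of_sum_ne_zero (hd.trans_ne one_ne_zero)
  refine ⟨k, congrArg _ (eq_of_le_of_sum_eq ?_ (by simp [hd])).symm⟩
  intro j
  by_cases h : j = k
  · subst h; simpa using Nat.one_le_iff_ne_zero.2 hk
  · simp [h]

lemma single_add_single_le {ι : Type*} [DecidableEq ι] {a : ι → ℕ} {i k : ι}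
    (hi : 1 ≤ a i) (hk : 1 ≤ a k) (hik : i = k → 2 ≤ a i) :
    (Pi.single i 1 + Pi.single k 1 : ι → ℕ) ≤ a := by
  intro j
  simp only [Pi.add_apply, Pi.single_apply]
  grind

theorem extremal_dvd_lcm_iff_mem (q : ℕ) (hq : 3 ≤ q)
    (σ : Finset (Fin q → ℕ)) (hσ : σ ∈ LFaces 2 q) (hne : σ.Nonempty)
    (c : Fin q → ℕ) (hc : ∑ i, c i = 2) :
    (epow q c ≤ fun A => σ.sup fun a => epow q a A) ↔ c ∈ σ := by
  refine ⟨fun h => ?_, fun h A => Finset.le_sup (f := fun a => epow q a A) h⟩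
  have key : ∀ A : Finset (Fin q), A.Nonempty → ∃ a ∈ σ, ∑ j ∈ A, c j ≤ ∑ j ∈ A, a j := by
    intro A hA
    obtain ⟨a, ha, hs⟩ := Finset.exists_mem_eq_sup σ hne fun a => epow q a ⟨A, hA⟩
    exact ⟨a, ha, (h ⟨A, hA⟩).trans_eq hs⟩
  obtain ⟨i, hF | hG⟩ := hσ
  · obtain ⟨j, -, hj⟩ := Finset.exists_ne_zero_of_sum_ne_zero (hc.trans_ne two_ne_zero)
    obtain ⟨k, rfl⟩ := exists_eq_single_add_single hc (Nat.one_le_iff_ne_zero.2 hj)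
    have hle : ∀ a ∈ σ, ∀ l, a l ≤ 1 := by
      intro a ha l
      obtain ⟨-, h₁, h₂⟩ := hF ha
      by_cases hl : l = i
      · subst hl; simpa using h₁
      · simpa using h₂ l hl
    by_cases hjk : j = k
    · subst hjk
      obtain ⟨a, ha, hs⟩ := key {j} (Finset.singleton_nonempty j)
      have := hle a ha j
      simp at hs
      omega
    · obtain ⟨a, ha, hs⟩ := key {j, k} (Finset.insert_nonempty _ _)
      have h₁ := hle a ha j
      have h₂ := hle a ha k
      simp [Finset.sum_pair hjk, hjk, Ne.symm hjk] at hs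
      rwa [eq_of_le_of_sum_eq (single_add_single_le (by omega) (by omega) fun e => absurd e hjk)
        (hc.trans (hF ha).1.symm)]
  · by_cases hi : 1 ≤ c i
    · obtain ⟨k, rfl⟩ := exists_eq_single_add_single hc hi
      obtain ⟨a, ha, hs⟩ := key {k} (Finset.singleton_nonempty k)
      obtain ⟨hsum, hai⟩ := hG ha
      have hk : 1 ≤ a k := by simp at hs; omega
      have hik : i = k → 2 ≤ a i := by rintro rfl; simpa using hs
      rwa [eq_of_le_of_sum_eq (single_add_single_le hai hk hik) (hc.trans hsum.symm)]
    · have : Nontrivial (Fin q) := Fin.nontrivial_iff_two_le.2 (by omega)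
      obtain ⟨l, hl⟩ := exists_ne i
      obtain ⟨a, ha, hs⟩ := key (Finset.univ.erase i) ⟨l, by simpa using hl⟩
      obtain ⟨hsum, hai⟩ := hG ha
      have h₁ := Finset.add_sum_erase Finset.univ c (Finset.mem_univ i)
      have h₂ := Finset.add_sum_erase Finset.univ a (Finset.mem_univ i)
      omega
end
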